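/- Let K be a countable subfield of ℂ of finite transcendence degree and assume SC_K holds. Let B be a countable subset of ℂ containing K which is strong with respect to δ_K, i.e. for every finite tuple x of complex numbers, δ_K(x/B) ≥ 0. Then the set of all x₀ ∈ ℂ such that either x₀ lies in the ℚ-linear span of B, or there exists a finite tuple x of complex numbers containing x₀, ℚ-linearly independent over the ℚ-linear span of B, with δ_K(x/B) = 0, is countable. -/

import Mathlib

/-!
Let `d` be a derivation of `ℂ` killing `K`, `B` and `exp B`, with `d (exp xᵢ) = exp xᵢ * d xᵢ`.
If `d` were nonzero on a tuple `x` with `δ_K(x/B) = 0`, one could split the `ℚ`-span of `x` into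
constants `y` of `d` and a complement `z` on which `d` is injective. By Ax's theorem over the
constants of `d`, `z` contributes strictly more to the linear dimension and the transcendence degree
in `δ_K` than its length, so that `δ_K(y/B) < 0`, against strongness. Hence such a `d` vanishes
on `x`.

On the other hand, if a set of tuples `x` all satisfying the same polynomial equations in
`(x, exp x)` over the countable field `ℚ(K, B, exp B)` accumulates at one of its points, then a
limiting secant direction `ξ` extends to such a derivation with `d xᵢ = ξᵢ`, so `ξ = 0`, which is
absurd. Each of the countably many prime ideals therefore accounts for a discrete, hence
countable, set of tuples.

Ax's theorem is proved by counting dimensions over `L` of the vectors of logarithmic derivatives: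
derivations act on them through Lie brackets, so a linear relation among them may be taken with
constant coefficients, and taking residues turns it into a multiplicative relation.
-/

open Complex

noncomputable section

/-- `F`-linear dimension of the `F`-span of a set of complex numbers. -/
def linDim (F : Type*) [Field F] [Algebra F ℂ] (s : Set ℂ) : ℕ :=
  Module.finrank F (Submodule.span F s)

/-- `F`-linear dimension of `s` over `B`: the dimension of the image of the
`F`-span of `s` in the quotient of ℂ by the `F`-span of `B`. -/
def linDimOver (F : Type*) [Field F] [Algebra F ℂ] (B s : Set ℂ) : ℕ :=
  Module.finrank F ((Submodule.span F s).map (Submodule.span F B).mkQ)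

/-- Transcendence degree over ℚ of ℚ(s): the size of the largest algebraically
independent finite subset of `s`. -/
def trdeg (s : Set ℂ) : ℕ :=
  sSup {k : ℕ | ∃ t : Finset ℂ, ↑t ⊆ s ∧ t.card = k ∧
    AlgebraicIndependent ℚ (fun x : {y : ℂ // y ∈ t} => (x : ℂ))}

/-- Transcendence degree of ℚ(C)(s) over ℚ(C). -/
def trdegOver (C s : Set ℂ) : ℕ :=
  sSup {k : ℕ | ∃ t : Finset ℂ, ↑t ⊆ s ∧ t.card = k ∧
    AlgebraicIndependent (IntermediateField.adjoin ℚ C) (fun x : {y : ℂ // y ∈ t} => (x : ℂ))}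

/-- `δ_K(x/B) = lin.d._K(x/B) + trdeg(exp x / exp B) − lin.d._ℚ(x/B)`,
as an integer. -/
def deltaK (K : IntermediateField ℚ ℂ) (B : Set ℂ) {n : ℕ} (x : Fin n → ℂ) : ℤ :=
  (linDimOver K B (Set.range x) : ℤ)
    + trdegOver (Complex.exp '' B) (Set.range fun i => Complex.exp (x i))
    - linDimOver ℚ B (Set.range x)

end

section FormallySmooth

theorem formallySmooth_of_charZero (K L : Type*) [Field K] [Field L] [CharZero K] [Algebra K L] :
    Algebra.FormallySmooth K L := by
  obtain ⟨s, hs⟩ := exists_isTranscendenceBasis K L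
  have := hs.isAlgebraic_field
  have : CharZero (IntermediateField.adjoin K (Set.range ((↑) : s → L))) :=
    charZero_of_injective_algebraMap (algebraMap K _).injective
  exact .of_algebraicIndependent_of_isSeparable hs.1

theorem formallySmooth_of_faithfulSMul (A L : Type*) [CommRing A] [IsDomain A] [CharZero A]
    [Field L] [Algebra A L] [FaithfulSMul A L] : Algebra.FormallySmooth A L := by
  let : Algebra (FractionRing A) L := FractionRing.liftAlgebra A L
  have := formallySmooth_of_charZero (FractionRing A) L
  have : Algebra.FormallySmooth A (FractionRing A) := .of_isLocalization (nonZeroDivisors _)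
  exact .comp _ (FractionRing A) _

theorem exists_derivation_extension {F A L : Type*} [CommRing F] [CommRing A] [Field L]
    [Algebra F A] [Algebra A L] [Algebra F L] [IsScalarTower F A L] [Algebra.FormallySmooth A L]
    (d : Derivation F A L) : ∃ D : Derivation F L L, ∀ a, D (algebraMap A L a) = d a := by
  have hinj : Function.Injective (KaehlerDifferential.mapBaseChange F A L) := by
    rw [injective_iff_map_eq_zero]
    intro ω hω
    obtain ⟨η, rfl⟩ := (Algebra.H1Cotangent.exact_δ_mapBaseChange F A L ω).1 hω
    rw [Subsingleton.elim η 0, map_zero]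
  obtain ⟨ρ, hρ⟩ := (KaehlerDifferential.mapBaseChange F A L).exists_leftInverse_of_injective
    (LinearMap.ker_eq_bot.2 hinj)
  refine ⟨(d.liftKaehlerDifferential.liftBaseChange L ∘ₗ ρ).compDer (KaehlerDifferential.D F L),
    fun a => ?_⟩
  have hDa : KaehlerDifferential.mapBaseChange F A L (1 ⊗ₜ KaehlerDifferential.D F A a)
      = KaehlerDifferential.D F L (algebraMap A L a) := by simp
  have hρa := LinearMap.congr_fun hρ (1 ⊗ₜ KaehlerDifferential.D F A a)
  rw [LinearMap.comp_apply, hDa] at hρa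
  simp [hρa]

end FormallySmooth

section Tangent

variable {F L σ : Type*} [Field F] [Field L] [CharZero L] [Algebra F L]

open MvPolynomial

theorem exists_derivation_of_tangent [Fintype σ] (g ξ : σ → L)
    (h : ∀ p : MvPolynomial σ F, aeval g p = 0 → ∑ i, aeval g (pderiv i p) * ξ i = 0) :
    ∃ D : Derivation F L L, ∀ i, D (g i) = ξ i := by
  let φ : MvPolynomial σ F →ₐ[F] (aeval g : MvPolynomial σ F →ₐ[F] L).range :=
    (aeval g).rangeRestrict
  let ψ : MvPolynomial σ F →ₗ[F] L :=
    ∑ i, LinearMap.mulRight F (ξ i) ∘ₗ (aeval g).toLinearMap ∘ₗ (pderiv i).toLinearMap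
  have hψ (p) : ψ p = ∑ i, aeval g (pderiv i p) * ξ i := by simp [ψ]
  obtain ⟨s, hs⟩ := φ.toLinearMap.exists_rightInverse_of_surjective
    (LinearMap.range_eq_top.2 (aeval g).rangeRestrict_surjective)
  have hφs (a) : φ (s a) = a := LinearMap.congr_fun hs a
  have hs' (a) : aeval g (s a) = a := congrArg Subtype.val (hφs a)
  have hψφ (p q) (hpq : aeval g p = aeval g q) : ψ p = ψ q := by
    rw [← sub_eq_zero, ← map_sub, hψ]
    exact h _ (by rw [map_sub, hpq, sub_self])
  have hψ_mul (p q) : ψ (p * q) = aeval g p * ψ q + aeval g q * ψ p := by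
    simp only [hψ, Derivation.leibniz, smul_eq_mul, map_add, map_mul, add_mul,
      Finset.sum_add_distrib, Finset.mul_sum, mul_assoc]
  have : CharZero F := (algebraMap F L).charZero
  have := formallySmooth_of_faithfulSMul (aeval g : MvPolynomial σ F →ₐ[F] L).range L
  obtain ⟨D, hD⟩ := exists_derivation_extension <|
    Derivation.mk' (ψ ∘ₗ s) fun a b => by
      rw [LinearMap.comp_apply, hψφ (s (a * b)) (s a * s b) (by simp [hs']), hψ_mul, hs', hs']
      rfl
  refine ⟨D, fun i => ?_⟩
  classical
  have hgi := hD (φ (X i))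
  rw [Derivation.coe_mk', LinearMap.comp_apply, hψφ _ (X i) (hs' _), hψ] at hgi
  simpa [φ, pderiv_X, Pi.single_apply, apply_ite (aeval g)] using hgi

theorem exists_derivation_apply_eq_of_algebraicIndependent [Finite σ] {g : σ → L}
    (hg : AlgebraicIndependent F g) (ξ : σ → L) : ∃ D : Derivation F L L, ∀ i, D (g i) = ξ i :=
  have := Fintype.ofFinite σ
  exists_derivation_of_tangent g ξ fun p hp => by simp [hg (hp.trans (map_zero _).symm)]

end Tangent

section Constants

variable {k L M : Type*} [Field k] [Field L] [Algebra k L] [AddCommGroup M] [Module L M]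
  [Module k M]

/-- The field of constants of a derivation: the elements it kills. -/
def constants (D : Derivation k L M) : IntermediateField k L where
  carrier := {a | D a = 0}
  mul_mem' {a b} ha hb := by simp_all
  add_mem' {a b} ha hb := by simp_all
  algebraMap_mem' := D.map_algebraMap
  inv_mem' a ha := by simp_all [D.leibniz_inv]

@[simp]
theorem mem_constants {D : Derivation k L M} {a : L} : a ∈ constants D ↔ D a = 0 := Iff.rfl

/-- A derivation regarded as linear over its field of constants. -/
def overConstants (D : Derivation k L M) : Derivation (constants D) L M :=
  .mk'
    { toFun := D
      map_add' := D.map_add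
      map_smul' := fun c a => by
        simp [IntermediateField.smul_def, mem_constants.1 c.2] }
    D.leibniz

theorem mem_constants_of_isAlgebraic [CharZero L] {D : Derivation k L M} {a : L}
    (ha : IsAlgebraic (constants D) a) : a ∈ constants D := by
  have hDa := (overConstants D).map_aeval (minpoly (constants D) a) a
  rw [minpoly.aeval, map_zero, eq_comm, smul_eq_zero] at hDa
  exact hDa.resolve_left
    ((minpoly.irreducible ha.isIntegral).separable.aeval_derivative_ne_zero (minpoly.aeval _ a))

theorem derivation_ext_of_isAlgebraic [CharZero L] {F : IntermediateField k L}
    [Algebra.IsAlgebraic F L] {D₁ D₂ : Derivation k L M} (h : Set.EqOn D₁ D₂ F) : D₁ = D₂ := by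
  have hF : F ≤ constants (D₁ - D₂) := fun a ha => by simp [h ha]
  ext a
  have ha : IsAlgebraic (constants (D₁ - D₂)) a :=
    (Algebra.IsAlgebraic.isAlgebraic (R := F) a).tower_top_of_subalgebra_le hF
  simpa [sub_eq_zero] using mem_constants_of_isAlgebraic ha

theorem derivation_mem_adjoin {D : Derivation k L L} {S : Set L}
    (hD : ∀ s ∈ S, D s ∈ IntermediateField.adjoin k S) {x : L}
    (hx : x ∈ IntermediateField.adjoin k S) : D x ∈ IntermediateField.adjoin k S := by
  induction hx using IntermediateField.adjoin_induction with
  | mem s hs => exact hD s hs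
  | algebraMap c => rw [D.map_algebraMap]; exact zero_mem _
  | add a b _ _ ha hb => rw [map_add]; exact add_mem ha hb
  | inv a ha hDa =>
    rw [D.leibniz_inv, smul_eq_mul]
    exact mul_mem (neg_mem (pow_mem (inv_mem ha) 2)) hDa
  | mul a b ha hb hDa hDb =>
    rw [D.leibniz]
    exact add_mem (mul_mem ha hDb) (mul_mem hb hDa)

end Constants

section LogarithmicDerivative

variable {k L : Type*} [Field k] [Field L] [Algebra k L]

/-- The logarithmic derivative of a unit with respect to a derivation of a field. -/
def dlog (D : Derivation k L L) (y : Lˣ) : L := D y / y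

variable (D : Derivation k L L)

theorem dlog_mul (y z : Lˣ) : dlog D (y * z) = dlog D y + dlog D z := by
  simp only [dlog, Units.val_mul, D.leibniz, smul_eq_mul]
  field_simp
  ring

theorem dlog_zpow (y : Lˣ) (n : ℤ) : dlog D (y ^ n) = n * dlog D y := by
  simp only [dlog, Units.val_zpow_eq_zpow_val, D.leibniz_zpow, smul_eq_mul, zsmul_eq_mul]
  rw [zpow_sub_one₀ y.ne_zero]
  field_simp

theorem dlog_prod {ι : Type*} (s : Finset ι) (y : ι → Lˣ) :
    dlog D (∏ i ∈ s, y i) = ∑ i ∈ s, dlog D (y i) := by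
  classical
  induction s using Finset.induction_on with
  | empty => simp [dlog]
  | insert i s hi ih => rw [Finset.prod_insert hi, Finset.sum_insert hi, dlog_mul, ih]

end LogarithmicDerivative

section Residue

variable {k L : Type*} [Field k] [Field L] [Algebra k L]

open Polynomial

/-- The elements of `k(u) ⊆ L` without a pole at `u = 0`, for `u` transcendental over `k`. -/
def regularAtZero (k : Type*) {L : Type*} [Field k] [Field L] [Algebra k L] (u : L) :
    Subalgebra k L where
  carrier := {x | ∃ g h : k[X], h.eval 0 ≠ 0 ∧ x * aeval u h = aeval u g}
  mul_mem' := by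
    rintro x y ⟨g, h, hh, hx⟩ ⟨g', h', hh', hy⟩
    refine ⟨g * g', h * h', by simp [hh, hh'], ?_⟩
    rw [map_mul, map_mul, ← hx, ← hy]
    ring
  add_mem' := by
    rintro x y ⟨g, h, hh, hx⟩ ⟨g', h', hh', hy⟩
    refine ⟨g * h' + g' * h, h * h', by simp [hh, hh'], ?_⟩
    rw [map_add, map_mul, map_mul, map_mul, ← hx, ← hy]
    ring
  algebraMap_mem' c := ⟨C c, 1, by simp, by simp⟩

theorem derivation_mem_regularAtZero {D : Derivation k L L} {u x : L} (hDu : D u = 1)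
    (hx : x ∈ regularAtZero k u) : D x ∈ regularAtZero k u := by
  obtain ⟨g, h, hh, hx⟩ := hx
  refine ⟨derivative g * h - g * derivative h, h * h, by simp [hh], ?_⟩
  have hDx := congrArg D hx
  simp only [D.leibniz, D.map_aeval, hDu, smul_eq_mul, mul_one] at hDx
  rw [map_sub, map_mul, map_mul, map_mul, ← hx, ← hDx]
  ring

theorem eq_zero_of_algebraMap_eq_mul {u x : L} (hu : Transcendental k u) {c : k}
    (hx : x ∈ regularAtZero k u) (h : algebraMap k L c = u * x) : c = 0 := by
  obtain ⟨p, q, hq, hx⟩ := hx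
  have hpq : C c * q = X * p := by
    refine transcendental_iff_injective.1 hu ?_
    rw [map_mul, map_mul, aeval_C, aeval_X, h, mul_assoc, hx]
  simpa [hq] using congrArg (eval 0) hpq

theorem exists_unit_regularAtZero {u : Lˣ} (hu : Transcendental k (u : L)) {p : k[X]}
    (hp : p ≠ 0) : ∃ n : ℕ, ∃ w ∈ (regularAtZero k (u : L)).toSubmonoid.units,
      aeval (u : L) p = ↑(u ^ n * w) := by
  obtain ⟨q, hpq, hq⟩ := p.exists_eq_pow_rootMultiplicity_mul_and_not_dvd hp 0
  rw [dvd_iff_isRoot, IsRoot.def] at hq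
  have hqu : aeval (u : L) q ≠ 0 := by
    refine fun h => hq ?_
    rw [transcendental_iff.1 hu q h, eval_zero]
  refine ⟨p.rootMultiplicity 0, .mk0 _ hqu,
    ⟨⟨q, 1, by simp, by simp⟩, ⟨1, q, hq, by simp [hqu]⟩⟩, ?_⟩
  conv_lhs => rw [hpq]
  simp

theorem exists_eq_zpow_mul_unit_regularAtZero {u z : Lˣ} (hu : Transcendental k (u : L))
    (hz : (z : L) ∈ IntermediateField.adjoin k {(u : L)}) :
    ∃ n : ℤ, ∃ w ∈ (regularAtZero k (u : L)).toSubmonoid.units, z = u ^ n * w := by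
  obtain ⟨r, s, hrs⟩ := (IntermediateField.mem_adjoin_simple_iff k _).1 hz
  have hr : r ≠ 0 := by rintro rfl; simp at hrs
  have hs : s ≠ 0 := by rintro rfl; simp at hrs
  obtain ⟨a, v, hv, hrv⟩ := exists_unit_regularAtZero hu hr
  obtain ⟨b, w, hw, hsw⟩ := exists_unit_regularAtZero hu hs
  refine ⟨a - b, v * w⁻¹, mul_mem hv (inv_mem hw), ?_⟩
  rw [hrv, hsw, ← Units.val_div_eq_div_val, Units.val_inj] at hrs
  rw [hrs, zpow_sub, zpow_natCast, zpow_natCast, div_eq_mul_inv, mul_inv]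
  exact mul_mul_mul_comm ..

theorem eq_zero_of_zpow_mem_units_regularAtZero {u : Lˣ} (hu : Transcendental k (u : L)) {n : ℤ}
    (hn : u ^ n ∈ (regularAtZero k (u : L)).toSubmonoid.units) : n = 0 := by
  by_contra hn0
  wlog hpos : 0 < n generalizing n
  · exact this (n := -n) (by rw [zpow_neg]; exact inv_mem hn) (by lia) (by lia)
  have hinv : (↑(u ^ (-n)) : L) ∈ regularAtZero k (u : L) := by rw [zpow_neg]; exact hn.2
  have hpow : (↑(u ^ (n - 1)) : L) ∈ regularAtZero k (u : L) := by
    lift n - 1 to ℕ using (by lia) with j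
    exact ⟨X ^ j, 1, by simp, by simp⟩
  refine one_ne_zero (eq_zero_of_algebraMap_eq_mul (c := (1 : k)) hu (mul_mem hpow hinv) ?_)
  rw [← Units.val_mul, ← Units.val_mul, ← zpow_add, ← zpow_one_add,
    show 1 + (n - 1 + -n) = 0 by ring]
  simp

/-- If `z i = u ^ v i * w i` with `w i` a unit at `u = 0`, then `dlog D (z i)` has residue `v i`
there. -/
theorem exists_order_of_sum_dlog_eq_zero {ι : Type*} [Fintype ι] {u : Lˣ}
    (hu : Transcendental k (u : L)) {D : Derivation k L L} (hDu : D u = 1) {z : ι → Lˣ}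
    (hz : ∀ i, (z i : L) ∈ IntermediateField.adjoin k {(u : L)}) {c : ι → k}
    (hc : ∑ i, c i • dlog D (z i) = 0) :
    ∃ v : ι → ℤ, ∑ i, c i * v i = 0 ∧
      ∀ (m : ι → ℤ) (n : ℤ), ∏ i, z i ^ m i = u ^ n → ∑ i, m i * v i = n := by
  choose v w hw hzw using fun i => exists_eq_zpow_mul_unit_regularAtZero hu (hz i)
  refine ⟨v, ?_, fun m n hmn => ?_⟩
  · have hreg : ∑ i, c i • dlog D (w i) ∈ regularAtZero k (u : L) := by
      refine sum_mem fun i _ => (regularAtZero k (u : L)).smul_mem ?_ _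
      rw [dlog, div_eq_mul_inv, ← Units.val_inv_eq_inv_val]
      exact mul_mem (derivation_mem_regularAtZero hDu (hw i).1) (hw i).2
    refine eq_zero_of_algebraMap_eq_mul hu (neg_mem hreg) ?_
    simp only [hzw, dlog_mul, dlog_zpow, smul_add, Finset.sum_add_distrib] at hc
    rw [← eq_neg_of_add_eq_zero_left hc, Finset.mul_sum, map_sum]
    refine Finset.sum_congr rfl fun i _ => ?_
    rw [dlog, hDu, Algebra.smul_def, map_mul, map_intCast]
    field_simp
  · have hu_mem : u ^ (n - ∑ i, m i * v i) ∈ (regularAtZero k (u : L)).toSubmonoid.units := by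
      have hprod : u ^ n = u ^ (∑ i, m i * v i) * ∏ i, w i ^ m i := by
        have hsum : u ^ (∑ i, m i * v i) = ∏ i, u ^ (m i * v i) :=
          map_sum (zmultiplesHom (Additive Lˣ) (.ofMul u)) (fun i => m i * v i) Finset.univ
        rw [← hmn, hsum, ← Finset.prod_mul_distrib]
        simp_rw [hzw, mul_zpow, ← zpow_mul, mul_comm]
      rw [zpow_sub, hprod, mul_right_comm, mul_inv_cancel, one_mul]
      exact prod_mem fun i _ => zpow_mem (hw i) (m i)
    linarith [eq_zero_of_zpow_mem_units_regularAtZero hu hu_mem]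

end Residue

section Norm

variable {k L : Type*} [Field k] [Field L] [CharZero L] [Algebra k L]
  {F : IntermediateField k L} [Algebra.IsAlgebraic F L] {D : Derivation k L L}

theorem derivation_apply_algEquiv (hD : ∀ x ∈ F, D x ∈ F) (e : L ≃ₐ[F] L) (x : L) :
    D (e x) = e (D x) := by
  let conjD : Derivation k L L :=
    .mk' ((e.restrictScalars k).symm.toLinearMap ∘ₗ D.toLinearMap ∘ₗ
      (e.restrictScalars k).toLinearMap) fun a b => by simp
  have hconj (x : L) : conjD x = e.symm (D (e x)) := rfl
  have hfix {s : L} (hs : s ∈ F) (e : L ≃ₐ[F] L) : e s = s := e.commutes ⟨s, hs⟩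
  have hDconj : conjD = D := derivation_ext_of_isAlgebraic fun s hs => by
    rw [hconj, hfix hs, hfix (hD s hs)]
  rw [← e.symm_apply_eq, ← hconj, hDconj]

theorem dlog_map_algEquiv (hD : ∀ x ∈ F, D x ∈ F) (e : L ≃ₐ[F] L) (y : Lˣ) :
    dlog D (Units.map (e : L →* L) y) = e (dlog D y) := by
  rw [dlog, dlog, map_div₀, ← derivation_apply_algEquiv hD]
  rfl

theorem sum_dlog_norm_eq_zero [IsAlgClosed L] (hD : ∀ x ∈ F, D x ∈ F) {ι : Type*} [Fintype ι]
    {c : ι → k} (E : IntermediateField F L) [FiniteDimensional F E] {Y : ι → Eˣ}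
    (hc : ∑ i, c i • dlog D (Units.map E.val (Y i)) = 0) :
    ∑ i, c i • dlog D (Units.map (algebraMap F L) (Units.map (Algebra.norm F) (Y i))) = 0 := by
  have : CharZero F := (algebraMap F L).charZero
  have : IsAlgClosure F L := ⟨inferInstance, inferInstance⟩
  have : Normal F L := IsAlgClosure.normal ..
  have hnorm (i : ι) : Units.map (algebraMap F L : F →* L) (Units.map (Algebra.norm F) (Y i))
      = ∏ σ : E →ₐ[F] L, Units.map (σ : E →* L) (Y i) :=
    Units.ext <| (Algebra.norm_eq_prod_embeddings F L (Y i : E)).trans <| by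
      rw [Units.coe_prod]; rfl
  simp only [hnorm, dlog_prod, Finset.smul_sum]
  rw [Finset.sum_comm]
  refine Finset.sum_eq_zero fun σ _ => ?_
  obtain ⟨e, he⟩ : ∃ e : L ≃ₐ[F] L, ∀ x : E, e x = σ x :=
    ⟨(Algebra.IsAlgebraic.algEquivEquivAlgHom _ _).symm (σ.liftNormal L), σ.liftNormal_commutes L⟩
  have hσ (i : ι) : Units.map (σ : E →* L) (Y i)
      = Units.map (e : L →* L) (Units.map (E.val : E →* L) (Y i)) := Units.ext (he _).symm
  calc ∑ i, c i • dlog D (Units.map (σ : E →* L) (Y i))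
      = (e.restrictScalars k) (∑ i, c i • dlog D (Units.map (E.val : E →* L) (Y i))) := by
        simp only [hσ, dlog_map_algEquiv hD, map_sum]
        exact Finset.sum_congr rfl fun i _ => ((e.restrictScalars k).toLinearMap.map_smul ..).symm
    _ = 0 := by rw [hc, map_zero]

end Norm

section AxRosenlicht

variable {C L ι : Type*} [Field C] [Field L] [CharZero L] [IsAlgClosed L] [Algebra C L] [Fintype ι]

theorem exists_order_of_prod_eq {u : Lˣ} (hu : Transcendental C (u : L))
    [Algebra.IsAlgebraic (IntermediateField.adjoin C {(u : L)}) L]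
    {y : ι → Lˣ} {m : ι → ℤ} (hum : ∏ i, y i ^ m i = u) {c : ι → C}
    {D : Derivation C L L} (hDu : D u = 1) (hc : ∑ i, c i • dlog D (y i) = 0) :
    ∃ v : ι → ℤ, ∑ i, c i * v i = 0 ∧ ∑ i, m i * v i ≠ 0 := by
  let F := IntermediateField.adjoin C {(u : L)}
  let E := IntermediateField.adjoin F (Set.range fun i => (y i : L))
  have : FiniteDimensional F E := IntermediateField.finiteDimensional_adjoin fun x _ =>
    (Algebra.IsAlgebraic.isAlgebraic (R := F) x).isIntegral
  have hyE (i : ι) : (y i : L) ∈ E := IntermediateField.subset_adjoin _ _ ⟨i, rfl⟩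
  let Y (i : ι) : Eˣ := .mk0 ⟨y i, hyE i⟩ (by simp [← Subtype.coe_ne_coe])
  let uF : Fˣ := .mk0 ⟨u, IntermediateField.mem_adjoin_simple_self C _⟩
    (by simp [← Subtype.coe_ne_coe])
  have hYy (i : ι) : Units.map (E.val : E →* L) (Y i) = y i := Units.ext rfl
  have hYu : ∏ i, Y i ^ m i = Units.map (algebraMap F E : F →* E) uF := by
    refine Units.map_injective (f := (E.val : E →* L)) Subtype.val_injective ?_
    simp only [map_prod, map_zpow, hYy, hum]
    exact Units.ext rfl
  let N : Eˣ →* Lˣ := (Units.map (algebraMap F L : F →* L)).comp (Units.map (Algebra.norm F))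
  have hN : ∑ i, c i • dlog D (N (Y i)) = 0 := by
    refine sum_dlog_norm_eq_zero (fun x hx => derivation_mem_adjoin (fun s hs => ?_) hx) E
      (by simpa only [hYy] using hc)
    rw [Set.mem_singleton_iff.1 hs, hDu]
    exact one_mem _
  have hNu : ∏ i, N (Y i) ^ m i = u ^ (Module.finrank F E : ℤ) := by
    simp only [← map_zpow, ← map_prod, hYu]
    refine Units.ext ?_
    simp [N, Algebra.norm_algebraMap, uF]
  obtain ⟨v, hcv, hv⟩ := exists_order_of_sum_dlog_eq_zero hu hDu (fun i => Subtype.property _) hN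
  refine ⟨v, hcv, ?_⟩
  rw [hv m _ hNu]
  exact_mod_cast Module.finrank_pos.ne'

theorem exists_order_of_forall_sum_dlog_eq_zero {u : Lˣ} (hu : Transcendental C (u : L))
    {y : ι → Lˣ} {m : ι → ℤ} (hum : ∏ i, y i ^ m i = u) {c : ι → C}
    (hc : ∀ D : Derivation C L L, ∑ i, c i • dlog D (y i) = 0) :
    ∃ v : ι → ℤ, ∑ i, c i * v i = 0 ∧ ∑ i, m i * v i ≠ 0 := by
  have hu' : AlgebraicIndepOn C id {(u : L)} :=
    (algebraicIndependent_singleton_iff (R := C) (x := fun i : ({(u : L)} : Set L) => (i : L))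
      ⟨u, rfl⟩).2 hu
  obtain ⟨S, huS, hS⟩ := exists_isTranscendenceBasis_superset hu'
  let k := IntermediateField.adjoin C (S \ {(u : L)})
  have huk : Transcendental k (u : L) := by
    have hS' : AlgebraicIndepOn C id (insert (u : L) (S \ {(u : L)})) := by
      rw [Set.insert_sdiff_singleton, Set.insert_eq_of_mem (huS rfl)]
      exact hS.1
    refine IntermediateField.transcendental_adjoin_iff.2 ?_
    have huS' := ((AlgebraicIndepOn.insert_iff (by simp)).1 hS').2
    rwa [Set.image_id] at huS'
  have : Algebra.IsAlgebraic (IntermediateField.adjoin k {(u : L)}) L := by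
    have := hS.isAlgebraic_field
    have hle : IntermediateField.adjoin C (Set.range ((↑) : S → L)) ≤
        (IntermediateField.adjoin k {(u : L)}).restrictScalars C := by
      rw [IntermediateField.adjoin_adjoin_left, Subtype.range_coe]
      exact IntermediateField.adjoin.mono _ _ _ (by simp)
    exact .ringHom_of_comp_eq (IntermediateField.inclusion hle) (RingHom.id L)
      (IntermediateField.inclusion_injective hle) Function.surjective_id rfl
  obtain ⟨D, hDu⟩ := exists_derivation_apply_eq_of_algebraicIndependent (F := k)
    (g := fun _ : Unit => (u : L)) (by simpa) 1
  obtain ⟨v, hcv, hmv⟩ := exists_order_of_prod_eq huk hum (c := fun i => algebraMap C k (c i))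
    (hDu ()) (by simpa [dlog] using hc (D.restrictScalars C))
  exact ⟨v, (algebraMap C k).injective (by simpa using hcv), hmv⟩

theorem exists_int_preserving_relations [CharZero C] {c : ι → C} (hc : c ≠ 0) :
    ∃ m : ι → ℤ, m ≠ 0 ∧ ∀ v : ι → ℤ, ∑ i, c i * v i = 0 → ∑ i, m i * v i = 0 := by
  obtain ⟨i, hi⟩ := Function.ne_iff.1 hc
  obtain ⟨φ, hφ⟩ := Module.exists_dual_forall_apply_ne_zero (K := ℚ) (fun _ : Unit => c i)
    (by simpa using hi)
  obtain ⟨N, hN⟩ := IsLocalization.exist_integer_multiples_of_finite (nonZeroDivisors ℤ)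
    fun i => φ (c i)
  choose m hm using hN
  have hm (i : ι) : (m i : ℚ) = (N : ℤ) * φ (c i) := by simpa using hm i
  refine ⟨m, fun h => ?_, fun v hv => ?_⟩
  · have := hm i
    simp_all
  · have hφv : ∑ i, φ (c i) * v i = 0 := by
      simpa only [mul_comm _ (Int.cast _), ← zsmul_eq_mul, map_sum, map_zsmul, map_zero]
        using congrArg φ hv
    have : ((∑ i, m i * v i : ℤ) : ℚ) = 0 := by
      push_cast
      simp only [hm, mul_assoc, ← Finset.mul_sum, hφv, mul_zero]
    exact_mod_cast this

theorem exists_isAlgebraic_prod_zpow {y : ι → Lˣ} {c : ι → C} (hc0 : c ≠ 0)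
    (hc : ∀ D : Derivation C L L, ∑ i, c i • dlog D (y i) = 0) :
    ∃ m : ι → ℤ, m ≠ 0 ∧ IsAlgebraic C ((∏ i, y i ^ m i : Lˣ) : L) := by
  have : CharZero C := (algebraMap C L).charZero
  obtain ⟨m, hm0, hm⟩ := exists_int_preserving_relations hc0
  refine ⟨m, hm0, not_not.1 fun hu => ?_⟩
  obtain ⟨v, hcv, hmv⟩ := exists_order_of_forall_sum_dlog_eq_zero hu rfl hc
  exact hmv (hm v hcv)

end AxRosenlicht

section ConstantVectors

variable {k L ι : Type*} [Field k] [Field L] [Algebra k L] {d : Derivation k L L}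

theorem exists_mem_derivation_comp_eq_zero [Finite ι] {P : Submodule L (ι → L)} (hP : P ≠ ⊥)
    (hdP : ∀ p ∈ P, d ∘ p ∈ P) : ∃ c ∈ P, c ≠ 0 ∧ d ∘ c = 0 := by
  obtain ⟨p, ⟨hpP, hp0⟩, hmin⟩ := (measure fun p : ι → L => p.support.ncard).wf.has_min
    {p | p ∈ P ∧ p ≠ 0} (P.ne_bot_iff.1 hP)
  obtain ⟨i, hi⟩ := Function.ne_iff.1 hp0
  have hcP : (p i)⁻¹ • p ∈ P := P.smul_mem _ hpP
  have hci : ((p i)⁻¹ • p) i = 1 := inv_mul_cancel₀ hi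
  refine ⟨_, hcP, fun h => zero_ne_one ((congrFun h i).symm.trans hci), not_not.1 fun hdc => ?_⟩
  refine hmin _ ⟨hdP _ hcP, hdc⟩ (Set.ncard_lt_ncard ⟨fun j hj hpj => hj ?_, fun hsub => ?_⟩)
  · simp [hpj]
  · exact hsub hi (by simp [hci])

theorem exists_ne_zero_forall_dotProduct_eq_zero [Fintype ι] {U : Submodule L (ι → L)} (hU : U ≠ ⊤)
    (hdU : ∀ u ∈ U, d ∘ u ∈ U) :
    ∃ c : ι → L, c ≠ 0 ∧ d ∘ c = 0 ∧ ∀ u ∈ U, c ⬝ᵥ u = 0 := by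
  classical
  let P : Submodule L (ι → L) := U.dualAnnihilator.comap (dotProductEquiv L ι).toLinearMap
  have hmemP {c : ι → L} : c ∈ P ↔ ∀ u ∈ U, c ⬝ᵥ u = 0 := by
    simp [P, Submodule.mem_dualAnnihilator]
  have hP : P ≠ ⊥ := by
    obtain ⟨f, hf0, hf⟩ := U.exists_le_ker_of_lt_top hU.lt_top
    refine P.ne_bot_iff.2 ⟨(dotProductEquiv L ι).symm f, ?_, by simpa using hf0⟩
    simpa [P, Submodule.mem_dualAnnihilator] using fun u hu => hf hu
  have hdP : ∀ p ∈ P, d ∘ p ∈ P := fun p hp => hmemP.2 fun u hu => by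
    have hleib : d (p ⬝ᵥ u) = p ⬝ᵥ (d ∘ u) + (d ∘ p) ⬝ᵥ u := by
      simp [dotProduct, Finset.sum_add_distrib, mul_comm]
    simpa [hmemP.1 hp u hu, hmemP.1 hp _ (hdU u hu)] using hleib.symm
  obtain ⟨c, hcP, hc⟩ := exists_mem_derivation_comp_eq_zero hP hdP
  exact ⟨c, hc.1, hc.2, hmemP.1 hcP⟩

end ConstantVectors

section AxInequality

theorem finrank_range_le_of_ker_le {K V W X : Type*} [Field K] [AddCommGroup V] [Module K V]
    [AddCommGroup W] [Module K W] [AddCommGroup X] [Module K X] [FiniteDimensional K X]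
    {f : V →ₗ[K] W} {g : V →ₗ[K] X} (h : g.ker ≤ f.ker) :
    Module.finrank K f.range ≤ Module.finrank K g.range := by
  have : FiniteDimensional K (V ⧸ g.ker) := .equiv g.quotKerEquivRange.symm
  rw [← Submodule.range_liftQ _ f h, ← g.quotKerEquivRange.finrank_eq]
  exact LinearMap.finrank_range_le _

variable {C L ι : Type*} [Field C] [Field L] [Algebra C L]

/-- The vector of logarithmic derivatives of `y`, as a linear function of the derivation. -/
def dlogVector (C : Type*) {L ι : Type*} [Field C] [Field L] [Algebra C L] (y : ι → Lˣ) :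
    Derivation C L L →ₗ[L] ι → L where
  toFun D i := dlog D (y i)
  map_add' _ _ := funext fun _ => add_div ..
  map_smul' _ _ := funext fun _ => mul_div_assoc ..

/-- The values at `ℓ` of the `C`-linear functions on the `C`-span of `ℓ`. -/
def spanEval (C : Type*) {L ι : Type*} [Field C] [Field L] [Algebra C L] (ℓ : ι → L) :
    (Submodule.span C (Set.range ℓ) →ₗ[C] L) →ₗ[L] ι → L where
  toFun φ i := φ ⟨ℓ i, Submodule.subset_span ⟨i, rfl⟩⟩
  map_add' _ _ := rfl
  map_smul' _ _ := rfl

theorem dlog_lie (d D : Derivation C L L) (y : Lˣ) :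
    dlog ⁅d, D⁆ y = d (dlog D y) - D (dlog d y) := by
  simp only [dlog, Derivation.commutator_apply, Derivation.leibniz_div, smul_eq_mul]
  field_simp
  ring

theorem derivation_comp_mem_range_dlogVector_sup {d : Derivation C L L} {y : ι → Lˣ} {u : ι → L}
    (hu : u ∈ (dlogVector C y).range ⊔ (spanEval C fun i => dlog d (y i)).range) :
    d ∘ u ∈ (dlogVector C y).range ⊔ (spanEval C fun i => dlog d (y i)).range := by
  obtain ⟨_, ⟨D, rfl⟩, _, ⟨φ, rfl⟩, rfl⟩ := Submodule.mem_sup.1 hu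
  refine Submodule.mem_sup.2 ⟨_, ⟨⁅d, D⁆, rfl⟩, _,
    ⟨D.toLinearMap ∘ₗ Submodule.subtype _ + d.toLinearMap ∘ₗ φ, rfl⟩, funext fun i => ?_⟩
  change dlog ⁅d, D⁆ (y i) + (D (dlog d (y i)) + d _) = d (dlog D (y i) + spanEval C _ φ i)
  rw [dlog_lie, map_add, ← add_assoc, sub_add_cancel]
  rfl

theorem finrank_range_spanEval_le [Finite ι] (ℓ : ι → L) :
    Module.finrank L (spanEval C ℓ).range ≤ Module.finrank C (Submodule.span C (Set.range ℓ)) :=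
  have := FiniteDimensional.span_of_finite C (Set.finite_range ℓ)
  (LinearMap.finrank_range_le _).trans_eq (Module.finrank_linearMap_self ..)

variable [CharZero L]

theorem finrank_range_dlogVector_le [Finite ι] (y : ι → Lˣ) :
    (Module.finrank L (dlogVector C y).range : ℕ∞) ≤
      (AlgebraicIndependent.matroid C L).eRk (Set.range fun i => (y i : L)) := by
  obtain ⟨t, ht⟩ := (AlgebraicIndependent.matroid C L).exists_isBasis
    (Set.range fun i => (y i : L))
  have : Fintype t := ((Set.finite_range _).subset ht.subset).fintype
  rw [← ht.encard_eq_eRk, Set.encard_eq_coe_toFinset_card, Set.toFinset_card]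
  let e : Derivation C L L →ₗ[L] t → L :=
    { toFun D i := D i, map_add' _ _ := rfl, map_smul' _ _ := rfl }
  have hker : e.ker ≤ (dlogVector C y).ker := fun D hD => funext fun i => by
    have htD : Algebra.adjoin C t ≤ (constants D).toSubalgebra :=
      Algebra.adjoin_le fun x hx => congrFun hD ⟨x, hx⟩
    have halg := (AlgebraicIndependent.matroid_isBasis_iff.1 ht).2.2 _ ⟨i, rfl⟩
    have hDy : D (y i) = 0 := mem_constants_of_isAlgebraic (halg.tower_top_of_subalgebra_le htD)
    simp [dlogVector, dlog, hDy]
  calc (Module.finrank L (dlogVector C y).range : ℕ∞)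
    _ ≤ Module.finrank L e.range := mod_cast finrank_range_le_of_ker_le hker
    _ ≤ Module.finrank L (t → L) := mod_cast e.range.finrank_le
    _ = Fintype.card t := by rw [Module.finrank_fintype_fun_eq_card]

/-- The inequality of Ax's theorem: the two ranges span `ι → L` because a linear relation on their
sum could be taken constant, and the inequality is strict because they share the vector
`dlog d ∘ y`. -/
theorem card_lt_eRk_add_finrank [IsAlgClosed L] [Fintype ι] [Nonempty ι] {d : Derivation C L L}
    (hd : ∀ a, d a = 0 → a ∈ (algebraMap C L).range) {y : ι → Lˣ}
    (hy : LinearIndependent ℤ fun i => dlog d (y i)) :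
    (Fintype.card ι : ℕ∞) <
      (AlgebraicIndependent.matroid C L).eRk (Set.range fun i => (y i : L)) +
        Module.finrank C (Submodule.span C (Set.range fun i => dlog d (y i))) := by
  let ℓ (i : ι) : L := dlog d (y i)
  let U := (dlogVector C y).range ⊔ (spanEval C ℓ).range
  have hU : U = ⊤ := by
    by_contra hU
    obtain ⟨c, hc0, hdc, hcU⟩ := exists_ne_zero_forall_dotProduct_eq_zero hU
      fun _ => derivation_comp_mem_range_dlogVector_sup
    choose c' hc' using fun i => hd (c i) (congrFun hdc i)
    obtain ⟨m, hm0, hm⟩ := exists_isAlgebraic_prod_zpow (C := C) (y := y) (c := c')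
      (by rintro rfl; exact hc0 (funext fun i => by simp [← hc'])) fun D => by
        simpa [dotProduct, Algebra.smul_def, hc', dlogVector] using
          hcU _ (Submodule.mem_sup_left ⟨D, rfl⟩)
    have hdm : dlog d (∏ i, y i ^ m i) = 0 := by
      rw [dlog, mem_constants_of_isAlgebraic (hm.tower_top (constants d)), zero_div]
    simp only [dlog_prod, dlog_zpow, ← zsmul_eq_mul] at hdm
    exact hm0 (funext (Fintype.linearIndependent_iff.1 hy m hdm))
  have hinf : (dlogVector C y).range ⊓ (spanEval C ℓ).range ≠ ⊥ :=
    Submodule.ne_bot_iff _ |>.2 ⟨ℓ, ⟨⟨d, rfl⟩, ⟨Submodule.subtype _, rfl⟩⟩,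
      fun h => hy.ne_zero (Classical.arbitrary ι) (congrFun h _)⟩
  have hcard : Fintype.card ι < Module.finrank L (dlogVector C y).range +
      Module.finrank L (spanEval C ℓ).range := by
    rw [← Submodule.finrank_sup_add_finrank_inf_eq, show _ ⊔ _ = _ from hU, finrank_top,
      Module.finrank_fintype_fun_eq_card]
    exact Nat.lt_add_of_pos_right (Submodule.one_le_finrank_iff.2 hinf)
  calc (Fintype.card ι : ℕ∞)
    _ < Module.finrank L (dlogVector C y).range + Module.finrank L (spanEval C ℓ).range := by
      exact_mod_cast hcard
    _ ≤ _ := add_le_add (finrank_range_dlogVector_le y)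
      (by exact_mod_cast finrank_range_spanEval_le ℓ)

end AxInequality

section LinearDimension

theorem finrank_map_mkQ_add_finrank_map_le {K V W : Type*} [Field K] [AddCommGroup V] [Module K V]
    [AddCommGroup W] [Module K W] {f : V →ₗ[K] W} {P X Y : Submodule K V} [FiniteDimensional K X]
    (hP : P ≤ f.ker) (hY : Y ≤ f.ker) (hYX : Y ≤ X) :
    Module.finrank K (Y.map P.mkQ) + Module.finrank K (X.map f) ≤
      Module.finrank K (X.map P.mkQ) := by
  let g : X.map P.mkQ →ₗ[K] W := (P.liftQ f hP).domRestrict (X.map P.mkQ)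
  have hrange : g.range = X.map f := by
    rw [LinearMap.range_domRestrict, ← Submodule.map_comp, Submodule.liftQ_mkQ]
  have hker : Y.map P.mkQ ≤ g.ker.map (X.map P.mkQ).subtype := by
    rintro _ ⟨v, hv, rfl⟩
    exact ⟨⟨P.mkQ v, v, hYX hv, rfl⟩, hY hv, rfl⟩
  rw [← g.finrank_range_add_finrank_ker, hrange, add_comm, ← Submodule.finrank_map_subtype_eq]
  gcongr
  exact Submodule.finrank_mono hker

theorem finrank_span_le_finrank_span_of_tower (K C : Type*) {V : Type*} [Field K] [Field C]
    [Algebra K C] [AddCommGroup V] [Module K V] [Module C V] [IsScalarTower K C V] {s : Set V}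
    (hs : s.Finite) :
    Module.finrank C (Submodule.span C s) ≤ Module.finrank K (Submodule.span K s) := by
  obtain ⟨b, hbs, hspan, hb⟩ := exists_linearIndependent K s
  have : Fintype b := (hs.subset hbs).fintype
  rw [← Submodule.span_span_of_tower K C s, ← hspan, Submodule.span_span_of_tower,
    finrank_span_set_eq_card hb]
  exact finrank_span_le_card b

theorem exists_linearIndependent_ker_and_range {k V W ι : Type*} [Field k] [AddCommGroup V]
    [Module k V] [AddCommGroup W] [Module k W] [Fintype ι] {x : ι → V}
    (hx : LinearIndependent k x) (f : V →ₗ[k] W) :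
    ∃ (r s : ℕ) (y : Fin r → Submodule.span k (Set.range x))
      (z : Fin s → Submodule.span k (Set.range x)), r + s = Fintype.card ι ∧
      LinearIndependent k y ∧ (∀ i, f (y i) = 0) ∧ (LinearIndependent k fun i => f (z i)) ∧
      ∀ i, f (x i) ∈ Submodule.span k (Set.range fun j => f (z j)) := by
  have := FiniteDimensional.span_of_finite k (Set.finite_range x)
  let g := f.domRestrict (Submodule.span k (Set.range x))
  let b := Module.finBasis k g.ker
  let c := Module.finBasis k g.range
  choose z hz using fun i => (c i).2
  have hfz : (fun i => f (z i)) = g.range.subtype ∘ c := funext hz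
  refine ⟨_, _, fun i => b i, z, ?_, ?_, fun i => (b i).2, ?_, fun i => ?_⟩
  · rw [add_comm, g.finrank_range_add_finrank_ker, finrank_span_eq_card hx]
  · exact b.linearIndependent.map' g.ker.subtype (Submodule.ker_subtype _)
  · rw [hfz]
    exact c.linearIndependent.map' g.range.subtype (Submodule.ker_subtype _)
  · rw [hfz, Set.range_comp, ← Submodule.map_span, c.span_eq, Submodule.map_subtype_top]
    exact ⟨⟨x i, Submodule.subset_span ⟨i, rfl⟩⟩, rfl⟩

theorem linDimOver_range_of_linearIndependent {F ι : Type*} [Field F] [Algebra F ℂ] [Fintype ι]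
    {B : Set ℂ} {x : ι → ℂ} (hx : LinearIndependent F fun i => (Submodule.span F B).mkQ (x i)) :
    linDimOver F B (Set.range x) = Fintype.card ι := by
  rw [linDimOver, Submodule.map_span, ← Set.range_comp]
  exact finrank_span_eq_card hx

theorem linDimOver_add_finrank_span_derivation_le {K : IntermediateField ℚ ℂ}
    {d : Derivation ℚ ℂ ℂ} (hK : K ≤ constants d) {B X Y Z : Set ℂ} (hB : B ⊆ constants d)
    (hX : X.Finite) (hZ : Z.Finite) (hY : Y ⊆ constants d)
    (hYX : Y ⊆ Submodule.span ℚ X) (hZX : Z ⊆ Submodule.span ℚ X) :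
    linDimOver K B Y + Module.finrank (constants d) (Submodule.span (constants d) (d '' Z)) ≤
      linDimOver K B X := by
  let := (IntermediateField.inclusion hK).toAlgebra
  have : IsScalarTower K (constants d) ℂ := .of_algebraMap_eq fun _ => rfl
  let dK : ℂ →ₗ[K] ℂ := (overConstants d).toLinearMap.restrictScalars K
  have := FiniteDimensional.span_of_finite K hX
  have hQK : (Submodule.span ℚ X : Set ℂ) ⊆ Submodule.span K X :=
    Submodule.span_le_restrictScalars ℚ K X
  have hspan : Submodule.span K (d '' Z) ≤ (Submodule.span K X).map dK := by
    rw [Submodule.span_le]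
    exact Set.image_mono (hZX.trans hQK)
  calc linDimOver K B Y + Module.finrank (constants d) (Submodule.span (constants d) (d '' Z))
    _ ≤ linDimOver K B Y + Module.finrank K (Submodule.span K (d '' Z)) := by
      gcongr
      exact finrank_span_le_finrank_span_of_tower K (constants d) (hZ.image d)
    _ ≤ linDimOver K B Y + Module.finrank K ((Submodule.span K X).map dK) := by
      gcongr
      exact Submodule.finrank_mono hspan
    _ ≤ linDimOver K B X := finrank_map_mkQ_add_finrank_map_le (Submodule.span_le.2 hB)
      (Submodule.span_le.2 hY) (Submodule.span_le.2 (hYX.trans hQK))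

end LinearDimension

section TranscendenceDegree

open AlgebraicIndependent

theorem coe_trdegOver (E : Set ℂ) {s : Set ℂ} (hs : s.Finite) :
    (trdegOver E s : ℕ∞) = (matroid (IntermediateField.adjoin ℚ E) ℂ).eRk s := by
  obtain ⟨I, hI⟩ := (matroid (IntermediateField.adjoin ℚ E) ℂ).exists_isBasis s
  lift I to Finset ℂ using hs.subset hI.subset
  rw [← hI.encard_eq_eRk, Set.encard_coe_eq_coe_finsetCard, trdegOver, IsGreatest.csSup_eq]
  refine ⟨⟨I, hI.subset, rfl, hI.indep⟩, ?_⟩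
  rintro _ ⟨t, hts, rfl, ht⟩
  have hle := Matroid.Indep.encard_le_eRk_of_subset (M := matroid _ ℂ) (I := t) ht hts
  rw [← hI.encard_eq_eRk, Set.encard_coe_eq_coe_finsetCard,
    Set.encard_coe_eq_coe_finsetCard] at hle
  exact_mod_cast hle

theorem matroid_eRk_add_le_of_tower {F C L : Type*} [Field F] [Field C] [Field L] [Algebra F C]
    [Algebra C L] [Algebra F L] [IsScalarTower F C L] {X Y Z : Set L}
    (hYC : Y ⊆ Set.range (algebraMap C L)) (hY : Y ⊆ (matroid F L).closure X)
    (hZ : Z ⊆ (matroid F L).closure X) :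
    (matroid F L).eRk Y + (matroid C L).eRk Z ≤ (matroid F L).eRk X := by
  obtain ⟨I, hI⟩ := (matroid F L).exists_isBasis Y
  obtain ⟨J, hJ⟩ := (matroid C L).exists_isBasis Z
  have hJI : AlgebraicIndependent F (Sum.elim (fun z : J => (z : L)) fun y : I => (y : L)) :=
    (matroid_indep_iff.1 hI.indep).sumElim_of_tower (by simpa using hI.subset.trans hYC)
      (matroid_indep_iff.1 hJ.indep)
  have hdisj : Disjoint I J := Set.disjoint_left.2 fun a haI haJ =>
    Sum.inl_ne_inr (hJI.injective (a₁ := .inl ⟨a, haJ⟩) (a₂ := .inr ⟨a, haI⟩) rfl)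
  have hind : (matroid F L).Indep (I ∪ J) := by
    simpa [Set.union_comm] using matroid_indep_iff.2 hJI.to_subtype_range
  rw [← hI.encard_eq_eRk, ← hJ.encard_eq_eRk, ← Set.encard_union_eq hdisj,
    ← (matroid F L).eRk_closure_eq X]
  exact hind.encard_le_eRk_of_subset
    (Set.union_subset (hI.subset.trans hY) (hJ.subset.trans hZ))

theorem trdegOver_add_eRk_le {E X Y Z : Set ℂ} {C : IntermediateField ℚ ℂ} (hE : E ⊆ C)
    (hX : X.Finite) (hYfin : Y.Finite) (hYC : Y ⊆ C)
    (hY : Y ⊆ (matroid (IntermediateField.adjoin ℚ E) ℂ).closure X)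
    (hZ : Z ⊆ (matroid (IntermediateField.adjoin ℚ E) ℂ).closure X) :
    trdegOver E Y + (matroid C ℂ).eRk Z ≤ trdegOver E X := by
  have hEC : IntermediateField.adjoin ℚ E ≤ C := IntermediateField.adjoin_le_iff.2 hE
  let := (IntermediateField.inclusion hEC).toAlgebra
  have : IsScalarTower (IntermediateField.adjoin ℚ E) C ℂ := .of_algebraMap_eq fun _ => rfl
  rw [coe_trdegOver E hX, coe_trdegOver E hYfin]
  exact matroid_eRk_add_le_of_tower (fun a ha => ⟨⟨a, hYC ha⟩, rfl⟩) hY hZ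

end TranscendenceDegree

section Exponential

/-- The exponential with values in the units of `ℂ`, on which `dlog` is defined. -/
noncomputable def expUnit (v : ℂ) : ℂˣ := .mk0 (exp v) (exp_ne_zero v)

@[simp]
theorem coe_expUnit (v : ℂ) : (expUnit v : ℂ) = exp v := rfl

theorem expUnit_add (v w : ℂ) : expUnit (v + w) = expUnit v * expUnit w := Units.ext (exp_add v w)

theorem dlog_expUnit_of_mem_span {d : Derivation ℚ ℂ ℂ} {S : Set ℂ}
    (hS : ∀ v ∈ S, dlog d (expUnit v) = d v) {v : ℂ} (hv : v ∈ Submodule.span ℚ S) :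
    dlog d (expUnit v) = d v :=
  have hadd (v w : ℂ) : dlog d (expUnit (v + w)) = dlog d (expUnit v) + dlog d (expUnit w) := by
    rw [expUnit_add, dlog_mul]
  LinearMap.eqOn_span' (f := (AddMonoidHom.mk' _ hadd).toRatLinearMap) (g := d.toLinearMap) hS hv

theorem isAlgebraic_exp_of_mem_span {A : Type*} [CommRing A] [IsDomain A] [Algebra A ℂ]
    {S : Set ℂ} (hS : ∀ v ∈ S, IsAlgebraic A (exp v)) {v : ℂ} (hv : v ∈ Submodule.span ℚ S) :
    IsAlgebraic A (exp v) := by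
  have hint (n : ℤ) {v : ℂ} (hv : IsAlgebraic A (exp v)) : IsAlgebraic A (exp (n * v)) := by
    obtain ⟨j, rfl | rfl⟩ := n.eq_nat_or_neg <;>
      simp [exp_neg, exp_nat_mul, hv.pow j, (hv.pow j).inv]
  induction hv using Submodule.span_induction with
  | mem v hv => exact hS v hv
  | zero => simpa using isAlgebraic_one
  | add v w _ _ hv hw => exact exp_add v w ▸ hv.mul hw
  | smul q v _ hv =>
    have hq : (q.den : ℂ) * (q • v) = q.num * v := by
      rw [Rat.smul_def, ← mul_assoc, mul_comm (q.den : ℂ)]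
      exact_mod_cast congrArg (fun r : ℚ => (r : ℂ) * v) q.mul_den_eq_num
    exact .of_pow q.den_pos (by rw [← exp_nat_mul, hq]; exact hint q.num hv)

theorem image_exp_span_subset_closure (F : Type*) [Field F] [Algebra F ℂ] (S : Set ℂ) :
    exp '' Submodule.span ℚ S ⊆ (AlgebraicIndependent.matroid F ℂ).closure (exp '' S) := by
  rintro _ ⟨v, hv, rfl⟩
  rw [AlgebraicIndependent.matroid_closure_eq]
  exact isAlgebraic_exp_of_mem_span (fun v hv => isAlgebraic_algebraMap
    (⟨exp v, Algebra.subset_adjoin ⟨v, hv, rfl⟩⟩ : Algebra.adjoin F (exp '' S))) hv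

end Exponential

section Transversality

variable {d : Derivation ℚ ℂ ℂ}

theorem card_lt_eRk_exp_add_finrank {ι : Type*} [Fintype ι] [Nonempty ι] {z : ι → ℂ}
    (hz : ∀ i, dlog d (expUnit (z i)) = d (z i)) (hdz : LinearIndependent ℚ fun i => d (z i)) :
    (Fintype.card ι : ℕ∞) <
      (AlgebraicIndependent.matroid (constants d) ℂ).eRk (exp '' Set.range z) +
        Module.finrank (constants d) (Submodule.span (constants d) (d '' Set.range z)) := by
  have hdlog : (fun i => dlog (overConstants d) (expUnit (z i))) = fun i => d (z i) := funext hz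
  have hax := card_lt_eRk_add_finrank (d := overConstants d) (y := fun i => expUnit (z i))
    (fun a ha => ⟨⟨a, ha⟩, rfl⟩) (by rw [hdlog]; exact hdz.restrict_scalars' ℤ)
  rw [hdlog] at hax
  rwa [← Set.range_comp, ← Set.range_comp]

theorem linearIndependent_mkQ_comp {k V ι κ : Type*} [Field k] [AddCommGroup V] [Module k V]
    {P : Submodule k V} {x : ι → V} (hx : LinearIndependent k fun i => P.mkQ (x i))
    {y : κ → Submodule.span k (Set.range x)} (hy : LinearIndependent k y) :
    LinearIndependent k fun i => P.mkQ (y i) := by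
  refine (hy.map' _ (Submodule.ker_subtype _)).map
    ((Submodule.range_ker_disjoint hx).mono_left (Submodule.span_le.2 ?_))
  rintro _ ⟨i, rfl⟩
  exact (y i).2

theorem deltaK_lt_deltaK {K : IntermediateField ℚ ℂ} {B : Set ℂ} {n r s : ℕ} {x : Fin n → ℂ}
    (hK : K ≤ constants d) (hB : B ⊆ constants d) (hE : exp '' B ⊆ constants d)
    (hli : LinearIndependent ℚ fun i => (Submodule.span ℚ B).mkQ (x i))
    (hx : ∀ i, dlog d (expUnit (x i)) = d (x i))
    {y : Fin r → Submodule.span ℚ (Set.range x)} {z : Fin s → Submodule.span ℚ (Set.range x)}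
    (hrs : r + s = n) (hs : s ≠ 0) (hy : LinearIndependent ℚ y) (hdy : ∀ i, d (y i) = 0)
    (hdz : LinearIndependent ℚ fun i => d (z i)) :
    deltaK K B (fun i => (y i : ℂ)) < deltaK K B x := by
  have : NeZero s := ⟨hs⟩
  have hspan {m : ℕ} (w : Fin m → Submodule.span ℚ (Set.range x)) :
      (Set.range fun i => (w i : ℂ)) ⊆ Submodule.span ℚ (Set.range x) :=
    Set.range_subset_iff.2 fun i => (w i).2
  have hclosure {m : ℕ} (w : Fin m → Submodule.span ℚ (Set.range x)) :=
    (Set.image_mono (f := exp) (hspan w)).trans <| image_exp_span_subset_closure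
      (IntermediateField.adjoin ℚ (exp '' B)) (Set.range x)
  have hdlog (v : Submodule.span ℚ (Set.range x)) : dlog d (expUnit v) = d v :=
    dlog_expUnit_of_mem_span (Set.forall_mem_range.2 hx) v.2
  have hexpy : (exp '' Set.range fun i => (y i : ℂ)) ⊆ constants d := by
    rintro _ ⟨_, ⟨i, rfl⟩, rfl⟩
    simpa [dlog] using (hdlog (y i)).trans (hdy i)
  have hlin := linDimOver_add_finrank_span_derivation_le hK hB (Set.finite_range x)
    (Set.finite_range fun i => (z i : ℂ)) (Set.range_subset_iff.2 hdy) (hspan y) (hspan z)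
  have htr := trdegOver_add_eRk_le hE ((Set.finite_range x).image exp)
    ((Set.finite_range _).image exp) hexpy (hclosure y) (hclosure z)
  have hax := card_lt_eRk_exp_add_finrank (fun i => hdlog (z i)) hdz
  have hdimx := linDimOver_range_of_linearIndependent hli
  have hdimy := linDimOver_range_of_linearIndependent (linearIndependent_mkQ_comp hli hy)
  lift (AlgebraicIndependent.matroid (constants d) ℂ).eRk (exp '' Set.range fun i => (z i : ℂ))
    to ℕ using ne_top_of_le_ne_top (ENat.natCast_ne_top _) (le_add_self.trans htr) with e
  norm_cast at hax htr
  rw [Fintype.card_fin] at hax hdimx hdimy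
  rw [deltaK, deltaK, Set.range_comp' exp, Set.range_comp' exp]
  omega

theorem derivation_apply_eq_zero_of_deltaK_eq_zero {K : IntermediateField ℚ ℂ} {B : Set ℂ}
    (hstrong : ∀ (n : ℕ) (x : Fin n → ℂ), deltaK K B x ≥ 0) {n : ℕ} {x : Fin n → ℂ}
    (hli : LinearIndependent ℚ fun i => (Submodule.span ℚ B).mkQ (x i)) (hδ : deltaK K B x = 0)
    (hK : K ≤ constants d) (hB : B ⊆ constants d) (hE : exp '' B ⊆ constants d)
    (hx : ∀ i, dlog d (expUnit (x i)) = d (x i)) (i : Fin n) : d (x i) = 0 := by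
  obtain ⟨r, s, y, z, hrs, hy, hdy, hdz, hspan⟩ :=
    exists_linearIndependent_ker_and_range (LinearIndependent.of_comp _ hli) d.toLinearMap
  obtain rfl | hs := eq_or_ne s 0
  · simpa using hspan i
  · have hlt := deltaK_lt_deltaK hK hB hE hli hx (hrs.trans (Fintype.card_fin n)) hs hy hdy hdz
    exact ((hstrong r _).not_gt (hlt.trans_eq hδ)).elim

end Transversality

section TangentCone

open MvPolynomial

variable {𝕜 E F σ : Type*} [NontriviallyNormedField 𝕜] [NormedAddCommGroup E] [NormedSpace 𝕜 E]
  [Field F] [Algebra F 𝕜]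

theorem hasFDerivWithinAt_aeval [Fintype σ] {S : Set E} {x : E} {f : E → σ → 𝕜} {f' : σ → E →L[𝕜] 𝕜}
    (hf : ∀ i, HasFDerivWithinAt (fun u => f u i) (f' i) S x) (p : MvPolynomial σ F) :
    HasFDerivWithinAt (fun u => aeval (f u) p) (∑ i, aeval (f x) (pderiv i p) • f' i) S x := by
  classical
  induction p using MvPolynomial.induction_on with
  | C a =>
    simp only [aeval_C]
    refine (hasFDerivWithinAt_const (algebraMap F 𝕜 a) x S).congr_fderiv ?_
    ext v
    simp
  | add p q hp hq =>
    simp only [map_add]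
    refine (hp.fun_add hq).congr_fderiv ?_
    ext v
    simp [add_mul, Finset.sum_add_distrib]
  | mul_X p j hp =>
    simp only [map_mul, aeval_X]
    refine (hp.mul (hf j)).congr_fderiv ?_
    ext v
    simp [pderiv_X, Pi.single_apply, add_mul, Finset.sum_add_distrib, Finset.mul_sum, mul_assoc,
      apply_ite, ite_mul]

theorem exists_derivation_of_mem_tangentConeAt [CharZero 𝕜] [Finite σ] {S : Set E} {x ξ : E}
    {f : E → σ → 𝕜} {f' : σ → E →L[𝕜] 𝕜} (hf : ∀ i, HasFDerivWithinAt (fun u => f u i) (f' i) S x)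
    (hS : ∀ u ∈ S, ∀ p : MvPolynomial σ F, aeval (f x) p = 0 → aeval (f u) p = 0)
    (hξ : ξ ∈ tangentConeAt 𝕜 S x) : ∃ D : Derivation F 𝕜 𝕜, ∀ i, D (f x i) = f' i ξ := by
  cases nonempty_fintype σ
  refine exists_derivation_of_tangent (f x) (fun i => f' i ξ) fun p hp => ?_
  have hzero : HasFDerivWithinAt (fun u => aeval (f u) p) (0 : E →L[𝕜] 𝕜) S x :=
    (hasFDerivWithinAt_const (0 : 𝕜) x S).congr (fun u hu => hS u hu p hp) hp
  simpa using (hasFDerivWithinAt_aeval hf p).unique_on hzero hξ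

theorem countable_of_forall_tangentConeAt_subset [ProperSpace E] {S : Set E}
    (hS : ∀ x ∈ S, tangentConeAt 𝕜 S x ⊆ {0}) : S.Countable := by
  have : DiscreteTopology S := discreteTopology_of_noAccPts fun x hx hacc =>
    let ⟨_, hξ, hξ0⟩ := tangentConeAt_nonempty_of_properSpace (𝕜 := 𝕜) hacc
    hξ0 (hS x hx hξ)
  exact Set.countable_coe_iff.1 (TopologicalSpace.separableSpace_iff_countable.1 inferInstance)

theorem countable_ideal (R : Type*) [CommRing R] [IsNoetherianRing R] [Countable R] :
    Countable (Ideal R) := by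
  choose s hs using (isNoetherianRing_iff_ideal_fg R).1 inferInstance
  exact (Function.LeftInverse.injective (g := fun t : Finset R => Ideal.span (t : Set R))
    hs).countable

/-- Points are sorted by the ideal of polynomials vanishing at `f x`; there are countably many
such ideals, and tangent vectors to one class extend to derivations. -/
theorem countable_of_forall_derivation (F : Type*) [Field F] [Algebra F 𝕜] [Countable F]
    [CharZero 𝕜] [Finite σ] [ProperSpace E] {S : Set E} {f : E → σ → 𝕜} {f' : E → σ → E →L[𝕜] 𝕜}
    (hf : ∀ x ∈ S, ∀ i, HasFDerivAt (fun u => f u i) (f' x i) x)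
    (hS : ∀ x ∈ S, ∀ (ξ : E) (D : Derivation F 𝕜 𝕜), (∀ i, D (f x i) = f' x i ξ) → ξ = 0) :
    S.Countable := by
  have : Countable (MvPolynomial σ F) := by
    rw [← Cardinal.mk_le_aleph0_iff]
    exact cardinalMk_le_max_lift.trans (by simp)
  have := countable_ideal (MvPolynomial σ F)
  let J (x : E) : Ideal (MvPolynomial σ F) := RingHom.ker (aeval (R := F) (f x))
  have hclass (I) : {x ∈ S | J x = I}.Countable := by
    refine countable_of_forall_tangentConeAt_subset (𝕜 := 𝕜) fun x hx ξ hξ => ?_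
    have hvanish (u) (hu : u ∈ {x ∈ S | J x = I}) (p : MvPolynomial σ F)
        (hp : aeval (f x) p = 0) : aeval (f u) p = 0 := (hu.2.trans hx.2.symm).ge hp
    obtain ⟨D, hD⟩ := exists_derivation_of_mem_tangentConeAt
      (fun i => (hf x hx.1 i).hasFDerivWithinAt) hvanish hξ
    exact hS x hx.1 ξ D hD
  refine (Set.countable_iUnion hclass).mono fun x hx => ?_
  exact Set.mem_iUnion_of_mem (J x) ⟨hx, rfl⟩

end TangentCone

theorem countable_intermediateField_adjoin {k L : Type*} [Field k] [Field L] [Algebra k L]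
    [Countable k] {s : Set L} (hs : s.Countable) : Countable (IntermediateField.adjoin k s) := by
  have := hs.to_subtype
  rw [← Cardinal.mk_le_aleph0_iff, ← Cardinal.lift_le_aleph0]
  refine (IntermediateField.lift_cardinalMk_adjoin_le k s).trans ?_
  simp

theorem countable_setOf_deltaK_eq_zero {K : IntermediateField ℚ ℂ} (hK : (K : Set ℂ).Countable)
    {B : Set ℂ} (hB : B.Countable) (hstrong : ∀ (n : ℕ) (x : Fin n → ℂ), deltaK K B x ≥ 0)
    (n : ℕ) : {x : Fin n → ℂ | LinearIndependent ℚ (fun i => (Submodule.span ℚ B).mkQ (x i)) ∧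
      deltaK K B x = 0}.Countable := by
  let F := IntermediateField.adjoin ℚ (K ∪ B ∪ exp '' B)
  have : Countable F := countable_intermediateField_adjoin ((hK.union hB).union (hB.image exp))
  have hproj (x : Fin n → ℂ) (i) :
      HasFDerivAt (fun u : Fin n → ℂ => u i) (ContinuousLinearMap.proj (R := ℂ) i) x :=
    hasFDerivAt_apply i x
  refine countable_of_forall_derivation F (f := fun x => Sum.elim x fun i => exp (x i))
    (f' := fun x => Sum.elim (fun i => .proj i) fun i => exp (x i) • .proj i)
    (fun x _ => Sum.rec (hproj x) fun i => (hproj x i).cexp) fun x hx ξ D hD => ?_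
  have hF (a : ℂ) (ha : a ∈ F) : D.restrictScalars ℚ a = 0 := D.map_algebraMap ⟨a, ha⟩
  have hsub : (K ∪ B ∪ exp '' B : Set ℂ) ⊆ constants (D.restrictScalars ℚ) :=
    (IntermediateField.subset_adjoin ℚ _).trans hF
  ext i
  rw [← show D (x i) = ξ i from hD (.inl i)]
  refine derivation_apply_eq_zero_of_deltaK_eq_zero (d := D.restrictScalars ℚ) hstrong hx.1 hx.2
    (fun a ha => hsub (.inl (.inl ha))) (fun a ha => hsub (.inl (.inr ha)))
    (fun a ha => hsub (.inr ha)) (fun j => ?_) i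
  have hxj : D (x j) = ξ j := hD (.inl j)
  have hexp : D (exp (x j)) = exp (x j) * ξ j := hD (.inr j)
  simp [dlog, hexp, hxj]

theorem statement12_general {K : IntermediateField ℚ ℂ} (hK : (K : Set ℂ).Countable) {B : Set ℂ}
    (hB : B.Countable) (hstrong : ∀ (n : ℕ) (x : Fin n → ℂ), deltaK K B x ≥ 0) :
    {x₀ : ℂ | x₀ ∈ Submodule.span ℚ B ∨ ∃ (n : ℕ) (x : Fin n → ℂ), (∃ i, x i = x₀) ∧
      LinearIndependent ℚ (fun i => (Submodule.span ℚ B).mkQ (x i)) ∧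
      deltaK K B x = 0}.Countable := by
  have hspan : (Submodule.span ℚ B : Set ℂ).Countable := by
    have := hB.to_subtype
    have : Countable (Submodule.span ℚ (Set.range ((↑) : B → ℂ))) := inferInstance
    rwa [Subtype.range_coe] at this
  have htuples : (⋃ (n : ℕ) (i : Fin n), (fun x : Fin n → ℂ => x i) ''
      {x | LinearIndependent ℚ (fun i => (Submodule.span ℚ B).mkQ (x i)) ∧
        deltaK K B x = 0}).Countable :=
    Set.countable_iUnion fun n => Set.countable_iUnion fun i =>
      (countable_setOf_deltaK_eq_zero hK hB hstrong n).image _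
  refine (hspan.union htuples).mono ?_
  rintro x₀ (h | ⟨n, x, ⟨i, rfl⟩, hx⟩)
  · exact .inl h
  · exact .inr (Set.mem_iUnion₂.2 ⟨n, i, x, hx, rfl⟩)

/-- let `K` be a countable subfield of ℂ of finite transcendence
degree satisfying SC_K, and let `B ⊇ K` be countable and strong with respect
to `δ_K`. Then the set of `x₀ ∈ ℂ` lying in the ℚ-span of `B`, or contained in
a tuple `x`, ℚ-linearly independent over the ℚ-span of `B`, with
`δ_K(x/B) = 0`, is countable. -/
theorem statement12 (K : IntermediateField ℚ ℂ)
    (hKcount : Set.Countable (K : Set ℂ))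
    (htd : BddAbove {k : ℕ | ∃ t : Finset ℂ, ↑t ⊆ (K : Set ℂ) ∧ t.card = k ∧
      AlgebraicIndependent ℚ (fun x : {y : ℂ // y ∈ t} => (x : ℂ))})
    (hSC : ∀ (m : ℕ) (x : Fin m → ℂ),
      (linDim K (Set.range x) : ℤ) + trdeg (Set.range fun i => Complex.exp (x i))
        - linDim ℚ (Set.range x) ≥ -(trdeg (K : Set ℂ) : ℤ))
    (B : Set ℂ) (hBcount : B.Countable) (hKB : (K : Set ℂ) ⊆ B)
    (hstrong : ∀ (n : ℕ) (x : Fin n → ℂ), deltaK K B x ≥ 0) :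
    Set.Countable {x₀ : ℂ | x₀ ∈ Submodule.span ℚ B ∨
      ∃ (n : ℕ) (x : Fin n → ℂ), (∃ i, x i = x₀)
        ∧ LinearIndependent ℚ (fun i => (Submodule.span ℚ B).mkQ (x i))
        ∧ deltaK K B x = 0} :=
  statement12_general hKcount hBcount hstrong
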